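/- Duplication relation for S-sums: let m ≥ 1, let a_1,…,a_m be positive integers, b_1,…,b_m positive reals, and n ∈ ℕ. Then Σ_{(σ_1,…,σ_m) ∈ {−1,1}^m} S_{a_1,…,a_m}(σ_1 b_1,…,σ_m b_m; 2n) = 2^{m − (a_1+⋯+a_m)} · S_{a_1,…,a_m}(b_1²,…,b_m²; n), where the sum on the left runs over all 2^m choices of signs σ_i ∈ {−1,1}. -/

import Mathlib

/-- S-sums: `SSum [(a₁,x₁),…] n` is `S_{a₁,…}(x₁,…; n)`; the empty sum equals `1`. -/
noncomputable def SSum : List (ℕ × ℝ) → ℕ → ℝ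
  | [], _ => 1
  | (a, x) :: t, n => ∑ i ∈ Finset.Icc 1 n, x ^ i / (i : ℝ) ^ a * SSum t i

/-!
Summing `(σ b) ^ k` over the sign `σ` gives `0` for odd `k` and `2 b ^ k` for even `k`. Hence
only even outer indices `k = 2 i` survive in the sum up to `2 n`, and the inner sums are again
evaluated at an even bound, so the relation follows by induction on the depth: each level
contributes `2 (b ^ 2) ^ i / (2 i) ^ a = 2 ^ (1 - a) (b ^ 2) ^ i / i ^ a`.
-/

theorem sum_Icc_two_mul_of_odd_eq_zero {M : Type*} [AddCommMonoid M] {f : ℕ → M}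
    (hf : ∀ k, Odd k → f k = 0) (n : ℕ) :
    ∑ k ∈ Finset.Icc 1 (2 * n), f k = ∑ k ∈ Finset.Icc 1 n, f (2 * k) := by
  induction n with
  | zero => simp
  | succ n ih =>
    have odd_term : f (2 * n + 1) = 0 := hf _ (odd_two_mul_add_one n)
    rw [Nat.mul_succ, Finset.sum_Icc_succ_top (by lia), Finset.sum_Icc_succ_top (by lia),
      Finset.sum_Icc_succ_top (by lia), ih, odd_term, add_zero, Nat.mul_succ]

theorem sum_sign_mul_pow_of_odd {R : Type*} [Ring R] (b : R) {k : ℕ} (hk : Odd k) :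
    ∑ s : Bool, ((if s then (1 : R) else -1) * b) ^ k = 0 := by
  simp [hk.neg_pow]

theorem sum_sign_mul_pow_of_even {R : Type*} [Ring R] (b : R) {k : ℕ} (hk : Even k) :
    ∑ s : Bool, ((if s then (1 : R) else -1) * b) ^ k = 2 * b ^ k := by
  simp [hk.neg_pow, two_mul]

theorem two_mul_div_two_mul_pow {K : Type*} [Field K] [NeZero (2 : K)] (x y : K) (a : ℕ) :
    2 * x / (2 * y) ^ a = 2 ^ (1 - (a : ℤ)) * (x / y ^ a) := by
  rw [zpow_sub₀ two_ne_zero, zpow_one, zpow_natCast, mul_pow, mul_div_mul_comm]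

theorem sum_SSum_ofFn_succ {ι : Type*} [Fintype ι] {m : ℕ} (a : Fin (m + 1) → ℕ)
    (x : Fin (m + 1) → ι → ℝ) (n : ℕ) :
    ∑ σ : Fin (m + 1) → ι, SSum (List.ofFn fun i => (a i, x i (σ i))) n =
      ∑ k ∈ Finset.Icc 1 n, (∑ s, x 0 s ^ k) / (k : ℝ) ^ a 0 *
        ∑ σ : Fin m → ι, SSum (List.ofFn fun j => (a j.succ, x j.succ (σ j))) k := by
  rw [← (Fin.consEquiv fun _ => ι).sum_comp]
  simp only [Fin.consEquiv_apply, List.ofFn_succ, Fin.cons_zero, Fin.cons_succ, SSum]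
  rw [Finset.sum_comm]
  simp only [Fintype.sum_prod_type, Finset.sum_div, Finset.sum_mul_sum]

theorem SSum_duplication_general (m : ℕ) (a : Fin m → ℕ) (b : Fin m → ℝ) (n : ℕ) :
    ∑ σ : Fin m → Bool,
        SSum (List.ofFn fun i => (a i, (if σ i then (1 : ℝ) else -1) * b i)) (2 * n) =
      (2 : ℝ) ^ ((m : ℤ) - ∑ i, (a i : ℤ)) * SSum (List.ofFn fun i => (a i, b i ^ 2)) n := by
  induction m generalizing n with
  | zero => simp [SSum]
  | succ m ih =>
    let T (k : ℕ) : ℝ := ∑ σ : Fin m → Bool,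
      SSum (List.ofFn fun j => (a j.succ, (if σ j then (1 : ℝ) else -1) * b j.succ)) k
    let e : ℤ := m - ∑ j : Fin m, (a j.succ : ℤ)
    have exponent_split : ((m + 1 : ℕ) : ℤ) - ∑ i, (a i : ℤ) = (1 - (a 0 : ℤ)) + e := by
      rw [Fin.sum_univ_succ]
      push_cast
      ring
    calc
      _ = ∑ k ∈ Finset.Icc 1 (2 * n),
            (∑ s : Bool, ((if s then (1 : ℝ) else -1) * b 0) ^ k) / (k : ℝ) ^ a 0 * T k :=
        sum_SSum_ofFn_succ a (fun i (s : Bool) => (if s then 1 else -1) * b i) (2 * n)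
      _ = ∑ k ∈ Finset.Icc 1 n, 2 * b 0 ^ (2 * k) / (2 * k : ℝ) ^ a 0 * T (2 * k) := by
        rw [sum_Icc_two_mul_of_odd_eq_zero fun k hk => by
          rw [sum_sign_mul_pow_of_odd _ hk, zero_div, zero_mul]]
        simp only [sum_sign_mul_pow_of_even _ (even_two_mul _), Nat.cast_mul, Nat.cast_ofNat]
      _ = ∑ k ∈ Finset.Icc 1 n, 2 ^ (1 - (a 0 : ℤ)) * ((b 0 ^ 2) ^ k / (k : ℝ) ^ a 0) *
            (2 ^ e * SSum (List.ofFn fun j => (a j.succ, b j.succ ^ 2)) k) := by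
        simp only [two_mul_div_two_mul_pow, pow_mul, T, e, ih (fun j => a j.succ)]
      _ = _ := by
        rw [exponent_split, zpow_add₀ two_ne_zero, List.ofFn_succ, SSum, Finset.mul_sum]
        simp only [mul_mul_mul_comm]

/-- Duplication relation for S-sums (depth `m + 1 ≥ 1`):
the sum over all `2^(m+1)` sign choices of `S_{a}(±b; 2n)` equals
`2^{(m+1) − (a₁+⋯+a_{m+1})} S_{a}(b²; n)`. -/
theorem SSum_duplication (m : ℕ) (a : Fin (m + 1) → ℕ) (b : Fin (m + 1) → ℝ) (n : ℕ)
    (ha : ∀ i, 0 < a i) (hb : ∀ i, 0 < b i) :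
    ∑ σ : Fin (m + 1) → Bool,
        SSum (List.ofFn fun i => (a i, (if σ i then (1 : ℝ) else -1) * b i)) (2 * n) =
      (2 : ℝ) ^ ((m + 1 : ℤ) - ∑ i, (a i : ℤ)) *
        SSum (List.ofFn fun i => (a i, b i ^ 2)) n := by
  exact_mod_cast SSum_duplication_general (m + 1) a b n
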